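/- arXiv:1404.1056 — 2 statements merged into one kernel-verified Lean document; each statement's English description precedes it below -/
import Mathlib

section
/- For every integer k ≥ 10 and every input list L, First Fit with cardinality constraint k satisfies FF(L) ≤ (2.7 − 3/k)·OPT(L) + 5. Consequently, the asymptotic competitive ratio of First Fit for k ≥ 10 is at most 2.7 − 3/k. -/
/-! An item that First Fit puts into a bin with `k` items weighs `1 / k`, so that such a bin weighs
`1`. Without these bins the packing is a First Fit packing in which the cardinality constraint is
never active, and there an item of size `s` weighs `weight δ s`, a modification of the classical
weight for the ratio `1.7`.

* First Fit: going through the remaining bins in order, let `m` be the largest free space so far.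
  All later items exceed `m`, and a bin lighter than `1` must raise `m` enough for the bounded
  `potential m` to pay for it. Hence the number of bins exceeds the total weight by at most a
  constant.
* Optimum: a bin with `n` items of the second kind has at most `k - n` of the first, so it weighs at
  most `2.7 - 3 / k` as soon as `n` items that fit together weigh at most `1.7 + (n - 3) / k`.

The classical weights give `1.7` for all `n`, which is not enough for `n ≤ 2`: an item slightly
above and one slightly below `1 / 2` would weigh about `1.7`. Hence the weight of items of size at
most `1 / 2` is capped at `0.65 - δ`. The First Fit bins that suffer consist of a capped item and an
item slightly above `1 / 4`, whose weight is therefore raised to `0.35 + δ`. Items slightly below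
`1 / 4` are lowered to `0.35 - δ`, so that one of each kind and an item of weight `1` still weigh
at most `1.7`; further items are paid for by the slack `(n - 3) / k`. -/

open scoped Classical
noncomputable section

/-- An input is a list of item sizes, each in (0,1]. -/
def ValidInput (L : List ℝ) : Prop := ∀ x ∈ L, 0 < x ∧ x ≤ 1

/-- A packing assigns a bin index to each item; it is feasible for cardinality
constraint `k` if every bin receives at most `k` items of total size at most 1. -/
def IsFeasible (k : ℕ) (L : List ℝ) (f : Fin L.length → ℕ) : Prop :=
  ∀ b : ℕ,
    (Finset.univ.filter (fun i => f i = b)).card ≤ k ∧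
    ∑ i ∈ Finset.univ.filter (fun i => f i = b), L.get i ≤ 1

/-- The number of bins used by a packing. -/
def binsUsed (L : List ℝ) (f : Fin L.length → ℕ) : ℕ :=
  (Finset.univ.image f).card

/-- The optimal (minimum) number of bins in a feasible packing of `L`. -/
def OPT (k : ℕ) (L : List ℝ) : ℕ :=
  sInf {n | ∃ f : Fin L.length → ℕ, IsFeasible k L f ∧ binsUsed L f = n}

/-- A deterministic online algorithm is a strategy: given the items seen so far
(ending with the item to be packed), it returns the bin index for that item. -/
def onlinePacking (A : List ℝ → ℕ) (L : List ℝ) : Fin L.length → ℕ :=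
  fun i => A (L.take (i.1 + 1))

/-- The strategy `A` is a valid online algorithm for cardinality constraint `k`
if on every valid input the induced packing is feasible. -/
def OnlineValid (k : ℕ) (A : List ℝ → ℕ) : Prop :=
  ∀ L : List ℝ, ValidInput L → IsFeasible k L (onlinePacking A L)

/-- The number of bins used by online algorithm `A` on input `L`. -/
def onlineBins (A : List ℝ → ℕ) (L : List ℝ) : ℕ :=
  binsUsed L (onlinePacking A L)

/-- The state of First Fit: a list of open bins (in order of opening),
each recorded as (number of items, total size). `ffFind` returns the index of
the first bin that can receive an item of size `x` (it has at most `k-1` items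
and the item fits); if none, the index of a new bin. -/
def ffFind (k : ℕ) (x : ℝ) : List (ℕ × ℝ) → ℕ
  | [] => 0
  | b :: bs => if b.1 < k ∧ b.2 + x ≤ 1 then 0 else ffFind k x bs + 1

/-- Update the First Fit state after packing an item of size `x`. -/
def ffUpdate (k : ℕ) (x : ℝ) : List (ℕ × ℝ) → List (ℕ × ℝ)
  | [] => [(1, x)]
  | b :: bs =>
      if b.1 < k ∧ b.2 + x ≤ 1 then (b.1 + 1, b.2 + x) :: bs
      else b :: ffUpdate k x bs

/-- The final state of First Fit with cardinality constraint `k` on input `L`. -/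
def ffState (k : ℕ) (L : List ℝ) : List (ℕ × ℝ) :=
  L.foldl (fun bs x => ffUpdate k x bs) []

/-- The number of bins used by First Fit with cardinality constraint `k` on `L`. -/
def FF (k : ℕ) (L : List ℝ) : ℕ := (ffState k L).length

/-- The bin index into which First Fit packs the `i`-th item of `L`. -/
def ffAssign (k : ℕ) (L : List ℝ) (i : Fin L.length) : ℕ :=
  ffFind k (L.get i) (ffState k (L.take i.1))

namespace FirstFit

/-! ### Item weights -/

/-- The part of the classical First Fit weight of an item of size at most `1 / 2` that exceeds
`6 / 5` of its size. -/
def bonus (s : ℝ) : ℝ := min (1 / 10) (max 0 (3 / 5 * (s - 1 / 6)))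

/-- The weight of an item of size `s` in a First Fit bin that is not full. For `δ = 0` this is the
classical weight for the ratio `1.7`, except that items of size at most `1 / 2` are capped at
`13 / 20`; a positive `δ` lowers that cap and opens a gap of `2 * δ` at size `1 / 4`. -/
def weight (δ s : ℝ) : ℝ :=
  if s ≤ 1 / 4 then min (6 / 5 * s + bonus s) (7 / 20 - δ)
  else if s ≤ 1 / 2 then min (max (6 / 5 * s + bonus s) (7 / 20 + δ)) (13 / 20 - δ)
  else 1

section Weight

variable {δ a b s : ℝ}

lemma bonus_nonneg (s : ℝ) : 0 ≤ bonus s := le_min (by norm_num) (le_max_left _ _)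

lemma bonus_le_tenth (s : ℝ) : bonus s ≤ 1 / 10 := min_le_left _ _

lemma bonus_mono : Monotone bonus := fun a b hab ↦ by
  unfold bonus
  gcongr

lemma le_bonus (hs : s ≤ 1 / 3) : 3 / 5 * (s - 1 / 6) ≤ bonus s :=
  le_min (by linarith only [hs]) (le_max_right _ _)

lemma bonus_eq_zero (hs : s ≤ 1 / 6) : bonus s = 0 := by
  rw [bonus, max_eq_left (by linarith only [hs]), min_eq_right (by norm_num)]

lemma bonus_le (hs : 1 / 6 ≤ s) : bonus s ≤ 3 / 5 * (s - 1 / 6) :=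
  (min_le_right _ _).trans (max_le (by linarith only [hs]) le_rfl)

lemma bonus_le_half_mul (hs : 0 ≤ s) : bonus s ≤ 1 / 2 * s := by
  rcases le_total s (1 / 6) with h | h
  · linarith only [bonus_eq_zero h, hs]
  · linarith only [bonus_le h, bonus_le_tenth s]

lemma bonus_add_le (ha : 0 ≤ a) (hb : 0 ≤ b) (hab : a + b ≤ 1 / 2) :
    bonus a + bonus b ≤ bonus (a + b) := by
  rcases le_total a (1 / 6) with ha' | ha'
  · rw [bonus_eq_zero ha', zero_add]
    exact bonus_mono (le_add_of_nonneg_left ha)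
  rcases le_total b (1 / 6) with hb' | hb'
  · rw [bonus_eq_zero hb', add_zero]
    exact bonus_mono (le_add_of_nonneg_right hb)
  have hfull : 1 / 10 ≤ bonus (a + b) :=
    (by norm_num : (1 / 10 : ℝ) ≤ 3 / 5 * (1 / 3 - 1 / 6)).trans <|
      (le_bonus le_rfl).trans (bonus_mono (by linarith only [ha', hb']))
  linarith only [bonus_le ha', bonus_le hb', hab, hfull]

lemma sum_bonus_le {N : Multiset ℝ} (h₀ : ∀ x ∈ N, 0 ≤ x) (hN : N.sum ≤ 1 / 2) :
    (N.map bonus).sum ≤ bonus N.sum := by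
  induction N using Multiset.induction_on with
  | empty => simpa using bonus_nonneg 0
  | cons a N ih =>
    rw [Multiset.forall_mem_cons] at h₀
    rw [Multiset.sum_cons] at hN
    rw [Multiset.map_cons, Multiset.sum_cons, Multiset.sum_cons]
    have ih := ih h₀.2 (by linarith only [h₀.1, hN])
    linarith only [ih, bonus_add_le h₀.1 (Multiset.sum_nonneg h₀.2) hN]

lemma weight_of_le_quarter (hs : s ≤ 1 / 4) :
    weight δ s = min (6 / 5 * s + bonus s) (7 / 20 - δ) := if_pos hs

lemma weight_of_quarter_lt (hs : 1 / 4 < s) (hs' : s ≤ 1 / 2) :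
    weight δ s = min (max (6 / 5 * s + bonus s) (7 / 20 + δ)) (13 / 20 - δ) := by
  rw [weight, if_neg hs.not_ge, if_pos hs']

lemma weight_of_half_lt (hs : 1 / 2 < s) : weight δ s = 1 := by
  rw [weight, if_neg (by linarith only [hs]), if_neg hs.not_ge]

lemma le_weight (hδ : δ ≤ 1 / 20) (hs : s ≤ 1 / 2) : 6 / 5 * s ≤ weight δ s := by
  have hbonus : 6 / 5 * s ≤ 6 / 5 * s + bonus s := le_add_of_nonneg_right (bonus_nonneg s)
  rcases le_or_gt s (1 / 4) with h | h
  · rw [weight_of_le_quarter h]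
    exact le_min hbonus (by linarith only [hδ, h])
  · rw [weight_of_quarter_lt h hs]
    exact le_min (le_max_of_le_left hbonus) (by linarith only [hδ, hs])

lemma weight_nonneg (hδ : δ ≤ 1 / 20) (hs : 0 ≤ s) : 0 ≤ weight δ s := by
  rcases le_or_gt s (1 / 2) with h | h
  · linarith only [le_weight hδ h, hs]
  · rw [weight_of_half_lt h]
    exact zero_le_one

lemma le_weight_of_quarter_lt (hδ : δ ≤ 1 / 20) (hs : 1 / 4 < s) (hs' : s ≤ 1 / 2) :
    7 / 20 + δ ≤ weight δ s := by
  rw [weight_of_quarter_lt hs hs']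
  exact le_min (le_max_right _ _) (by linarith only [hδ])

lemma weight_eq_of_lt_bonus (hs : s ≤ 1 / 2) (h : weight δ s < 6 / 5 * s + bonus s) :
    s ≤ 1 / 4 ∧ weight δ s = 7 / 20 - δ ∨ 1 / 4 < s ∧ weight δ s = 13 / 20 - δ := by
  rcases le_or_gt s (1 / 4) with hq | hq
  · rw [weight_of_le_quarter hq] at h ⊢
    exact .inl ⟨hq, min_eq_right ((min_lt_iff.1 h).resolve_left (lt_irrefl _)).le⟩
  · rw [weight_of_quarter_lt hq hs] at h ⊢
    have hcap := (min_lt_iff.1 h).resolve_left (le_max_left _ _).not_gt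
    exact .inr ⟨hq, min_eq_right (hcap.le.trans (le_max_left _ _))⟩

lemma weight_le_bonus (hs : s ≤ 1 / 4) : weight δ s ≤ 6 / 5 * s + bonus s := by
  rw [weight_of_le_quarter hs]
  exact min_le_left _ _

lemma weight_le_of_le_quarter (hs : s ≤ 1 / 4) : weight δ s ≤ 7 / 20 - δ := by
  rw [weight_of_le_quarter hs]
  exact min_le_right _ _

lemma weight_le_cap (hs : s ≤ 1 / 2) : weight δ s ≤ 13 / 20 - δ := by
  rcases le_or_gt s (1 / 4) with h | h
  · linarith only [weight_le_of_le_quarter (δ := δ) h]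
  · rw [weight_of_quarter_lt h hs]
    exact min_le_right _ _

lemma weight_le_of_bonus_lt (hs : s ≤ 1 / 2) (h : 6 / 5 * s + bonus s < weight δ s) :
    1 / 4 < s ∧ weight δ s ≤ 7 / 20 + δ := by
  have hq : 1 / 4 < s := lt_of_not_ge fun hq ↦ (weight_le_bonus hq).not_gt h
  rw [weight_of_quarter_lt hq hs] at h ⊢
  have hraised := (lt_max_iff.1 (h.trans_le (min_le_left _ _))).resolve_left (lt_irrefl _)
  exact ⟨hq, (min_le_left _ _).trans (max_le hraised.le le_rfl)⟩

lemma weight_le_mul (hδ : δ ≤ 1 / 20) (hs : 0 ≤ s) (hs' : s ≤ 1 / 2) :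
    weight δ s ≤ 17 / 10 * s := by
  rcases le_or_gt (weight δ s) (6 / 5 * s + bonus s) with h | h
  · linarith only [h, bonus_le_half_mul hs]
  · obtain ⟨hq, hw⟩ := weight_le_of_bonus_lt hs' h
    linarith only [hq, hw, hδ]

end Weight

/-! ### Bins of an arbitrary packing -/

section FeasibleBin

variable {δ t : ℝ} {N : Multiset ℝ}

lemma sum_weight_le_bonus (h₀ : ∀ x ∈ N, 0 ≤ x) (hN : N.sum ≤ 1 / 2)
    (hw : ∀ x ∈ N, weight δ x ≤ 6 / 5 * x + bonus x) :
    (N.map (weight δ)).sum ≤ 6 / 5 * N.sum + bonus N.sum := by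
  calc (N.map (weight δ)).sum ≤ (N.map fun x ↦ 6 / 5 * x + bonus x).sum :=
        Multiset.sum_map_le_sum_map _ _ hw
    _ = 6 / 5 * N.sum + (N.map bonus).sum := by
        rw [Multiset.sum_map_add, Multiset.sum_map_mul_left, Multiset.map_id']
    _ ≤ 6 / 5 * N.sum + bonus N.sum := by
        gcongr
        exact sum_bonus_le h₀ hN

lemma sum_weight_le_card_mul (hN : ∀ x ∈ N, x ≤ 1 / 2) :
    (N.map (weight δ)).sum ≤ N.card * (13 / 20 - δ) := by
  have h := Multiset.sum_le_card_nsmul (N.map (weight δ)) (13 / 20 - δ) <|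
    Multiset.forall_mem_map_iff.2 fun x hx ↦ weight_le_cap (hN x hx)
  rwa [Multiset.card_map, nsmul_eq_mul] at h

lemma sum_weight_le_of_sum_le_quarter (ht₀ : 0 ≤ t) (hδt : δ ≤ t) (h₀ : ∀ x ∈ N, 0 ≤ x)
    (hN : N.sum ≤ 1 / 4) (hcard : 1 ≤ N.card) :
    (N.map (weight δ)).sum ≤ 7 / 20 - δ + (N.card - 1) * t := by
  have hquarter : ∀ x ∈ N, x ≤ 1 / 4 := fun x hx ↦ (Multiset.single_le_sum h₀ x hx).trans hN
  rcases hcard.eq_or_lt' with h | h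
  · obtain ⟨a, rfl⟩ := Multiset.card_eq_one.1 h
    simpa using weight_le_of_le_quarter (hquarter a (by simp))
  · have hsum := sum_weight_le_bonus (δ := δ) h₀ (by linarith only [hN])
      fun x hx ↦ weight_le_bonus (hquarter x hx)
    have hbonus : bonus N.sum ≤ 3 / 5 * (1 / 4 - 1 / 6) :=
      (bonus_mono hN).trans (bonus_le (by norm_num))
    have hcard_mul : t ≤ (N.card - 1) * t :=
      le_mul_of_one_le_left ht₀ (le_sub_iff_add_le.2 (by exact_mod_cast h))
    linarith only [hsum, hbonus, hcard_mul, hδt, hN]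

lemma sum_weight_le_of_sum_lt_half (ht₀ : 0 ≤ t) (ht : t ≤ 1 / 10) (hδt : δ ≤ t)
    (htδ : t ≤ 1 / 20 + δ) (h₀ : ∀ x ∈ N, 0 ≤ x) (hN : N.sum < 1 / 2) :
    (N.map (weight δ)).sum ≤ 7 / 10 + (N.card - 2) * t := by
  have hhalf : ∀ x ∈ N, x ≤ 1 / 2 := fun x hx ↦ (Multiset.single_le_sum h₀ x hx).trans hN.le
  rcases lt_or_ge N.card 2 with hcard | hcard
  · refine (sum_weight_le_card_mul hhalf).trans ?_
    interval_cases N.card <;> push_cast <;> linarith only [ht, htδ]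
  by_cases hraised : ∃ e ∈ N, 6 / 5 * e + bonus e < weight δ e
  · obtain ⟨e, he, hlt⟩ := hraised
    obtain ⟨he_quarter, he_le⟩ := weight_le_of_bonus_lt (hhalf e he) hlt
    obtain ⟨M, rfl⟩ := Multiset.exists_cons_of_mem he
    rw [Multiset.sum_cons] at hN
    rw [Multiset.card_cons] at hcard
    have hM := sum_weight_le_of_sum_le_quarter ht₀ hδt (Multiset.forall_mem_cons.1 h₀).2
      (by linarith only [he_quarter, hN]) (by omega)
    rw [Multiset.map_cons, Multiset.sum_cons, Multiset.card_cons]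
    push_cast
    linarith only [hM, he_le]
  · push Not at hraised
    have hsum := sum_weight_le_bonus h₀ hN.le hraised
    have hcard_mul : 0 ≤ (N.card - 2) * t :=
      mul_nonneg (sub_nonneg.2 (by exact_mod_cast hcard)) ht₀
    linarith only [hsum, bonus_le_tenth N.sum, hcard_mul, hN]

/-- With `t = 1 / k`, the term `(N.card - 3) * t` makes up for the `N.card` places that are no
longer available to items of weight `1 / k`. -/
lemma sum_weight_le_of_sum_le_one (ht₀ : 0 ≤ t) (hδ : δ ≤ 1 / 20) (hδt : δ ≤ t)
    (htδ : t ≤ 1 / 20 + δ) (h₀ : ∀ x ∈ N, 0 ≤ x) (hN : N.sum ≤ 1) :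
    (N.map (weight δ)).sum ≤ 17 / 10 + (N.card - 3) * t := by
  have ht : t ≤ 1 / 10 := by linarith only [hδ, htδ]
  by_cases hbig : ∃ e ∈ N, 1 / 2 < e
  · obtain ⟨e, he, he_half⟩ := hbig
    obtain ⟨M, rfl⟩ := Multiset.exists_cons_of_mem he
    rw [Multiset.sum_cons] at hN
    have hM := sum_weight_le_of_sum_lt_half ht₀ ht hδt htδ (Multiset.forall_mem_cons.1 h₀).2
      (by linarith only [he_half, hN])
    rw [Multiset.map_cons, Multiset.sum_cons, Multiset.card_cons, weight_of_half_lt he_half]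
    push_cast
    linarith only [hM]
  push Not at hbig
  rcases lt_or_ge N.card 3 with hcard | hcard
  · refine (sum_weight_le_card_mul hbig).trans ?_
    interval_cases N.card <;> push_cast <;> linarith only [ht₀, ht, htδ]
  · have hcard_mul : 0 ≤ (N.card - 3) * t :=
      mul_nonneg (sub_nonneg.2 (by exact_mod_cast hcard)) ht₀
    calc (N.map (weight δ)).sum ≤ (N.map fun x ↦ 17 / 10 * x).sum :=
          Multiset.sum_map_le_sum_map _ _ fun x hx ↦ weight_le_mul hδ (h₀ x hx) (hbig x hx)
      _ = 17 / 10 * N.sum := by rw [Multiset.sum_map_mul_left, Multiset.map_id']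
      _ ≤ 17 / 10 + (N.card - 3) * t := by linarith only [hN, hcard_mul]

end FeasibleBin

/-! ### Bins of a First Fit packing -/

section FirstFitBin

variable {δ m r : ℝ} {B : Multiset ℝ}

lemma sum_weight_nonneg (hδ : δ ≤ 1 / 20) (h₀ : ∀ x ∈ B, 0 ≤ x) :
    0 ≤ (B.map (weight δ)).sum :=
  Multiset.sum_nonneg <| Multiset.forall_mem_map_iff.2 fun x hx ↦ weight_nonneg hδ (h₀ x hx)

lemma mul_sum_le_sum_weight (hδ : δ ≤ 1 / 20) (hB : ∀ x ∈ B, x ≤ 1 / 2) :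
    6 / 5 * B.sum ≤ (B.map (weight δ)).sum := by
  calc 6 / 5 * B.sum = (B.map fun x ↦ 6 / 5 * x).sum := by
        rw [Multiset.sum_map_mul_left, Multiset.map_id']
    _ ≤ (B.map (weight δ)).sum :=
        Multiset.sum_map_le_sum_map _ _ fun x hx ↦ le_weight hδ (hB x hx)

lemma one_le_weight_add_weight {a b : ℝ} (hδ : δ ≤ 1 / 20) (ha : 1 / 4 < a) (ha' : a ≤ 1 / 2)
    (hb : 1 / 4 < b) (hb' : b ≤ 1 / 2) (hlt : weight δ b < 6 / 5 * b + bonus b) :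
    1 ≤ weight δ a + weight δ b := by
  have hwa := le_weight_of_quarter_lt hδ ha ha'
  rcases weight_eq_of_lt_bonus hb' hlt with ⟨hb'', -⟩ | ⟨-, hwb⟩
  · exact absurd hb'' hb.not_ge
  · linarith only [hwa, hwb]

lemma one_le_weight_add_weight_add_weight {a b c : ℝ} (hδ : δ ≤ 1 / 20)
    (hwa : 1 / 5 ≤ weight δ a) (ha : a ≤ 1 / 2) (hb : b ≤ 1 / 2) (hc : c ≤ 1 / 2)
    (hlt_b : weight δ b < 6 / 5 * b + bonus b) (hlt_c : weight δ c < 6 / 5 * c + bonus c)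
    (hsum : b ≤ 1 / 4 → 3 / 4 < a + (b + c)) :
    1 ≤ weight δ a + (weight δ b + weight δ c) := by
  rcases weight_eq_of_lt_bonus hb hlt_b with ⟨hb', hwb⟩ | ⟨-, hwb⟩ <;>
    rcases weight_eq_of_lt_bonus hc hlt_c with ⟨hc', hwc⟩ | ⟨-, hwc⟩
  · have ha' : 1 / 4 < a := by linarith only [hsum hb', hb', hc']
    linarith only [le_weight_of_quarter_lt hδ ha' ha, hwb, hwc, hδ]
  all_goals linarith only [hwa, hwb, hwc, hδ]

lemma one_le_weight_add_sum_weight {a : ℝ} (hδ : δ ≤ 1 / 20) (hm : 1 / 6 ≤ m) (hma : m < a)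
    (ha : a ≤ 1 / 2) (hmB : ∀ x ∈ B, m < x) (hB : ∀ x ∈ B, x ≤ 1 / 2)
    (hlt : ∀ x ∈ B, weight δ x < 6 / 5 * x + bonus x) (hsum : 1 / 2 < a + B.sum)
    (hsum' : m < 1 / 4 → 3 / 4 < a + B.sum) :
    1 ≤ weight δ a + (B.map (weight δ)).sum := by
  have hwa : 1 / 5 ≤ weight δ a := by linarith only [le_weight hδ ha, hm, hma]
  have hw : ∀ x ∈ B, 3 / 10 ≤ weight δ x := fun x hx ↦ by
    rcases weight_eq_of_lt_bonus (hB x hx) (hlt x hx) with ⟨-, h⟩ | ⟨-, h⟩ <;>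
      linarith only [h, hδ]
  obtain hcard | hcard | hcard | hcard :
      B.card = 0 ∨ B.card = 1 ∨ B.card = 2 ∨ 3 ≤ B.card := by omega
  · rw [Multiset.card_eq_zero.1 hcard, Multiset.sum_zero] at hsum
    linarith only [ha, hsum]
  · obtain ⟨b, rfl⟩ := Multiset.card_eq_one.1 hcard
    simp only [Multiset.mem_singleton, forall_eq, Multiset.sum_singleton,
      Multiset.map_singleton] at *
    have hquarter : 1 / 4 < a ∧ 1 / 4 < b := by
      rcases lt_or_ge m (1 / 4) with h | h
      · constructor <;> linarith only [hsum' h, ha, hB]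
      · exact ⟨h.trans_lt hma, h.trans_lt hmB⟩
    exact one_le_weight_add_weight hδ hquarter.1 ha hquarter.2 hB hlt
  · obtain ⟨b, c, rfl⟩ := Multiset.card_eq_two.1 hcard
    simp only [Multiset.insert_eq_cons, Multiset.forall_mem_cons, Multiset.mem_singleton,
      forall_eq, Multiset.map_cons, Multiset.map_singleton, Multiset.sum_cons,
      Multiset.sum_singleton] at *
    exact one_le_weight_add_weight_add_weight hδ hwa ha hB.1 hB.2 hlt.1 hlt.2
      fun hb ↦ hsum' (hmB.1.trans_le hb)
  · have hsum_w := Multiset.card_nsmul_le_sum (Multiset.forall_mem_map_iff.2 hw)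
    rw [Multiset.card_map, nsmul_eq_mul] at hsum_w
    have hcard' : (3 : ℝ) ≤ B.card := by exact_mod_cast hcard
    linarith only [hwa, hsum_w, hcard']

/-- Two items whose weight is not reduced collect the bonus of `m` twice, and a bin with at most one
such item is heavy. -/
lemma one_le_sum_weight_or_bonus_le (hδ : δ ≤ 1 / 20) (hmB : ∀ x ∈ B, m < x)
    (hB : ∀ x ∈ B, x ≤ 1 / 2) (hsum : 1 / 2 < B.sum) (hsum' : m < 1 / 4 → 3 / 4 < B.sum) :
    1 ≤ (B.map (weight δ)).sum ∨ 6 / 5 * B.sum + 2 * bonus m ≤ (B.map (weight δ)).sum := by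
  rcases le_total m (1 / 6) with hm | hm
  · rw [bonus_eq_zero hm, mul_zero, add_zero]
    exact .inr (mul_sum_le_sum_weight hδ hB)
  have hcons (a : ℝ) (C : Multiset ℝ) (hBC : B = a ::ₘ C)
      (hlt : ∀ x ∈ C, weight δ x < 6 / 5 * x + bonus x) : 1 ≤ (B.map (weight δ)).sum := by
    subst hBC
    rw [Multiset.forall_mem_cons] at hmB hB
    rw [Multiset.sum_cons] at hsum hsum'
    rw [Multiset.map_cons, Multiset.sum_cons]
    exact one_le_weight_add_sum_weight hδ hm hmB.1 hB.1 hmB.2 hB.2 hlt hsum hsum'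
  by_cases ha : ∃ a ∈ B, 6 / 5 * a + bonus a ≤ weight δ a
  · obtain ⟨a, ha, hwa⟩ := ha
    obtain ⟨C, hBC⟩ := Multiset.exists_cons_of_mem ha
    by_cases hb : ∃ b ∈ C, 6 / 5 * b + bonus b ≤ weight δ b
    · obtain ⟨b, hb, hwb⟩ := hb
      obtain ⟨D, rfl⟩ := Multiset.exists_cons_of_mem hb
      subst hBC
      simp only [Multiset.forall_mem_cons, Multiset.map_cons, Multiset.sum_cons] at hmB hB ⊢
      have hD := mul_sum_le_sum_weight hδ hB.2.2
      exact .inr (by linarith only [hwa, hwb, hD, bonus_mono hmB.1.le, bonus_mono hmB.2.1.le])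
    · push Not at hb
      exact .inl (hcons a C hBC hb)
  · push Not at ha
    obtain ⟨a, C, hBC⟩ : ∃ a C, B = a ::ₘ C := by
      refine (Multiset.empty_or_exists_mem B).elim (fun h ↦ ?_) fun ⟨a, ha⟩ ↦
        ⟨a, Multiset.exists_cons_of_mem ha⟩
      norm_num [h] at hsum
    exact .inl (hcons a C hBC fun x hx ↦ ha x (hBC ▸ Multiset.mem_cons_of_mem hx))

/-- The unit step at `c`, a building block of `potential`. -/
def unitStep (c m : ℝ) : ℝ := if c ≤ m then 1 else 0

lemma unitStep_nonneg (c m : ℝ) : 0 ≤ unitStep c m := by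
  unfold unitStep
  positivity

lemma unitStep_le_one (c m : ℝ) : unitStep c m ≤ 1 := by
  unfold unitStep
  split_ifs <;> norm_num

lemma unitStep_mono (c : ℝ) : Monotone (unitStep c) := fun m r hmr ↦ by
  rcases le_or_gt c m with h | h
  · rw [unitStep, unitStep, if_pos h, if_pos (h.trans hmr)]
  · rw [unitStep, if_neg h.not_ge]
    exact unitStep_nonneg c r

lemma unitStep_sub_unitStep {c : ℝ} (hm : m < c) (hr : c ≤ r) :
    unitStep c r - unitStep c m = 1 := by
  rw [unitStep, unitStep, if_pos hr, if_neg hm.not_ge, sub_zero]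

/-- The credit accumulated by First Fit once all further items are larger than `m`. Each step pays
for the single bin that moves `m` across that threshold. -/
def potential (m : ℝ) : ℝ :=
  2 * bonus m + 1 / 5 * unitStep (1 / 4) m + unitStep (1 / 3) m + unitStep (1 / 2) m

lemma potential_nonneg (m : ℝ) : 0 ≤ potential m := by
  unfold potential
  linarith only [bonus_nonneg m, unitStep_nonneg (1 / 4) m, unitStep_nonneg (1 / 3) m,
    unitStep_nonneg (1 / 2) m]

lemma potential_le (m : ℝ) : potential m ≤ 12 / 5 := by
  unfold potential
  linarith only [bonus_le_tenth m, unitStep_le_one (1 / 4) m, unitStep_le_one (1 / 3) m,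
    unitStep_le_one (1 / 2) m]

lemma bonus_sub_le_potential_sub (hmr : m ≤ r) :
    2 * (bonus r - bonus m) ≤ potential r - potential m := by
  unfold potential
  linarith only [unitStep_mono (1 / 4) hmr, unitStep_mono (1 / 3) hmr, unitStep_mono (1 / 2) hmr]

lemma fifth_le_potential_sub (hm : m < 1 / 4) (hr : 1 / 4 ≤ r) :
    1 / 5 ≤ potential r - potential m := by
  have hmr := hm.le.trans hr
  unfold potential
  linarith only [bonus_mono hmr, unitStep_sub_unitStep hm hr, unitStep_mono (1 / 3) hmr,
    unitStep_mono (1 / 2) hmr]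

lemma one_le_potential_sub_of_third (hm : m < 1 / 3) (hr : 1 / 3 ≤ r) :
    1 ≤ potential r - potential m := by
  have hmr := hm.le.trans hr
  unfold potential
  linarith only [bonus_mono hmr, unitStep_mono (1 / 4) hmr, unitStep_sub_unitStep hm hr,
    unitStep_mono (1 / 2) hmr]

lemma one_le_potential_sub_of_half (hm : m < 1 / 2) (hr : 1 / 2 ≤ r) :
    1 ≤ potential r - potential m := by
  have hmr := hm.le.trans hr
  unfold potential
  linarith only [bonus_mono hmr, unitStep_mono (1 / 4) hmr, unitStep_mono (1 / 3) hmr,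
    unitStep_sub_unitStep hm hr]

lemma one_le_potential_sub_of_sum_lt (hB₀ : B ≠ 0) (h₀ : ∀ x ∈ B, 0 ≤ x)
    (hmB : ∀ x ∈ B, m < x) (hB : ∀ x ∈ B, x ≤ 1 / 2) (hr : 1 - B.sum ≤ r)
    (hsum : B.sum < 2 / 3) : 1 ≤ potential r - potential m := by
  obtain ⟨a, ha⟩ := Multiset.exists_mem_of_ne_zero hB₀
  obtain ⟨C, rfl⟩ := Multiset.exists_cons_of_mem ha
  rcases C.empty_or_exists_mem with rfl | ⟨b, hb⟩
  · simp only [Multiset.mem_cons, Multiset.notMem_zero, or_false, forall_eq, Multiset.sum_cons,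
      Multiset.sum_zero, add_zero] at *
    exact one_le_potential_sub_of_half (hmB.trans_le hB) (by linarith only [hB, hr])
  · obtain ⟨D, rfl⟩ := Multiset.exists_cons_of_mem hb
    simp only [Multiset.forall_mem_cons, Multiset.sum_cons] at h₀ hmB hsum hr
    have hD := Multiset.sum_nonneg h₀.2.2
    exact one_le_potential_sub_of_third (by linarith only [hD, hmB.1, hmB.2.1, hsum])
      (by linarith only [hr, hsum])

lemma one_le_sum_weight_add_potential_sub (hδ : δ ≤ 1 / 20) (hB₀ : B ≠ 0)
    (h₀ : ∀ x ∈ B, 0 ≤ x) (hmB : ∀ x ∈ B, m < x) (hmr : m ≤ r) (hr : 1 - B.sum ≤ r) :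
    1 ≤ (B.map (weight δ)).sum + (potential r - potential m) := by
  have hnonneg := sum_weight_nonneg hδ h₀
  have hpot := bonus_sub_le_potential_sub hmr
  have hbonus := bonus_mono hmr
  by_cases hbig : ∃ e ∈ B, 1 / 2 < e
  · obtain ⟨e, he, he_half⟩ := hbig
    obtain ⟨C, rfl⟩ := Multiset.exists_cons_of_mem he
    have hC := sum_weight_nonneg hδ (Multiset.forall_mem_cons.1 h₀).2
    rw [Multiset.map_cons, Multiset.sum_cons, weight_of_half_lt he_half]
    linarith only [hC, hpot, hbonus]
  push Not at hbig
  have hsize := mul_sum_le_sum_weight hδ hbig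
  rcases lt_or_ge B.sum (2 / 3) with hsum | hsum
  · linarith only [one_le_potential_sub_of_sum_lt hB₀ h₀ hmB hbig hr hsum, hnonneg]
  by_cases hjump : m < 1 / 4 ∧ B.sum ≤ 3 / 4
  · have hquarter := fifth_le_potential_sub (r := r) hjump.1 (by linarith only [hjump.2, hr])
    linarith only [hquarter, hsize, hsum]
  have hfree : 3 / 5 * (1 - B.sum - 1 / 6) ≤ bonus r :=
    (le_bonus (by linarith only [hsum])).trans (bonus_mono hr)
  rcases one_le_sum_weight_or_bonus_le hδ hmB hbig (by linarith only [hsum])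
    fun hm ↦ lt_of_not_ge fun h ↦ hjump ⟨hm, h⟩ with h | h
  · linarith only [h, hpot, hbonus]
  · linarith only [h, hpot, hfree]

end FirstFitBin

section UnconstrainedPacking

variable {ι : Type*} {sz : ι → ℝ} {δ : ℝ}

/-- While the bins are traversed in order, `m` is a lower bound on the sizes of the items still to
come: the larger of its previous value and the free space of the bin just passed. -/
lemma length_le_sum_weight_add_potential (hδ : δ ≤ 1 / 20) (hsz : ∀ i, 0 ≤ sz i)
    (bins : List (List ι)) (m : ℝ) (hne : [] ∉ bins) (hm : ∀ i ∈ bins.flatten, m < sz i)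
    (hfit : bins.Pairwise fun A B ↦ ∀ i ∈ B, 1 < (A.map sz).sum + sz i) :
    (bins.length : ℝ) ≤
      (bins.flatten.map fun i ↦ weight δ (sz i)).sum + (12 / 5 - potential m) := by
  induction bins generalizing m with
  | nil => simpa using potential_le m
  | cons B bins ih =>
    rw [List.mem_cons, not_or] at hne
    rw [List.flatten_cons, List.forall_mem_append] at hm
    obtain ⟨hB, hfit⟩ := List.pairwise_cons.1 hfit
    have hbin := one_le_sum_weight_add_potential_sub (B := (B.map sz : List ℝ)) hδ
      (by simpa using Ne.symm hne.1) (by simpa using fun i _ ↦ hsz i) (by simpa using hm.1)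
      (le_max_left m _) (le_max_right m _)
    have hrest := ih (max m (1 - (B.map sz).sum)) hne.2
      (fun i hi ↦ by
        obtain ⟨C, hC, hiC⟩ := List.mem_flatten.1 hi
        exact max_lt (hm.2 i hi) (sub_lt_iff_lt_add'.2 (hB C hC i hiC))) hfit
    rw [Multiset.map_coe, Multiset.sum_coe, Multiset.sum_coe, List.map_map,
      Function.comp_def] at hbin
    rw [List.length_cons, List.flatten_cons, List.map_append, List.sum_append]
    push_cast
    linarith only [hbin, hrest]

end UnconstrainedPacking

/-! ### First Fit on labelled items -/

section LabelledItems

variable {ι : Type*} (k : ℕ) (sz : ι → ℝ)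

/-- A bin, given as the list of its items, can receive the item `i` of size `sz i`. -/
def Fits (B : List ι) (i : ι) : Prop := B.length < k ∧ (B.map sz).sum + sz i ≤ 1

/-- The First Fit step `ffUpdate` on bins that record their items instead of only the number and
total size of their items. -/
def place (i : ι) : List (List ι) → List (List ι)
  | [] => [[i]]
  | B :: bins => if Fits k sz B i then (i :: B) :: bins else B :: place i bins

/-- The First Fit packing of a list of items, as a list of bins in the order of opening. -/
def packing (items : List ι) : List (List ι) :=
  items.foldl (fun bins i ↦ place k sz i bins) []

/-- What `ffState` records of a bin. -/
def summary (B : List ι) : ℕ × ℝ := (B.length, (B.map sz).sum)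

variable {k sz} {i : ι} {bins : List (List ι)}

lemma packing_append_singleton (items : List ι) (i : ι) :
    packing k sz (items ++ [i]) = place k sz i (packing k sz items) :=
  List.foldl_concat ..

lemma map_summary_place (i : ι) (bins : List (List ι)) :
    (place k sz i bins).map (summary sz) = ffUpdate k (sz i) (bins.map (summary sz)) := by
  induction bins with
  | nil => simp [place, summary, ffUpdate]
  | cons B bins ih =>
    have hiff : (summary sz B).1 < k ∧ (summary sz B).2 + sz i ≤ 1 ↔ Fits k sz B i := Iff.rfl
    simp only [place, List.map_cons, ffUpdate, hiff]
    split_ifs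
    · simp [summary, add_comm]
    · rw [List.map_cons, ih]

lemma map_summary_packing (items : List ι) :
    (packing k sz items).map (summary sz) = ffState k (items.map sz) := by
  induction items using List.reverseRecOn with
  | nil => rfl
  | append_singleton items i ih =>
    rw [packing_append_singleton, map_summary_place, ih, List.map_append, List.map_singleton,
      ffState, ffState, List.foldl_concat]

lemma flatten_place_perm (i : ι) (bins : List (List ι)) :
    (place k sz i bins).flatten.Perm (i :: bins.flatten) := by
  induction bins with
  | nil => exact .refl _
  | cons B bins ih =>
    rw [place]
    split_ifs
    · exact .refl _
    · exact (ih.append_left B).trans List.perm_middle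

lemma flatten_packing_perm (items : List ι) : (packing k sz items).flatten.Perm items := by
  induction items using List.reverseRecOn with
  | nil => exact .refl _
  | append_singleton items i ih =>
    rw [packing_append_singleton]
    exact (flatten_place_perm i _).trans <|
      (ih.cons i).trans (List.perm_append_singleton i items).symm

lemma nil_notMem_place (h : [] ∉ bins) : [] ∉ place k sz i bins := by
  induction bins with
  | nil => simp [place]
  | cons B bins ih =>
    rw [List.mem_cons, not_or] at h
    rw [place]
    split_ifs
    · simpa using h.2
    · exact List.mem_cons.not.2 (not_or.2 ⟨h.1, ih h.2⟩)

lemma nil_notMem_packing (items : List ι) : [] ∉ packing k sz items := by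
  induction items using List.reverseRecOn with
  | nil => simp [packing]
  | append_singleton items i ih =>
    rw [packing_append_singleton]
    exact nil_notMem_place ih

lemma Fits.of_cons {B : List ι} {j : ι} (hi : 0 ≤ sz i) (h : Fits k sz (i :: B) j) :
    Fits k sz B j := by
  refine ⟨(Nat.lt_succ_self _).trans h.1, ?_⟩
  have hsum := h.2
  rw [List.map_cons, List.sum_cons] at hsum
  linarith only [hi, hsum]

lemma pairwise_not_fits_place (hi : 0 ≤ sz i)
    (h : bins.Pairwise fun A B ↦ ∀ j ∈ B, ¬ Fits k sz A j) :
    (place k sz i bins).Pairwise fun A B ↦ ∀ j ∈ B, ¬ Fits k sz A j := by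
  induction bins with
  | nil => exact List.pairwise_singleton _ _
  | cons B bins ih =>
    obtain ⟨hB, hbins⟩ := List.pairwise_cons.1 h
    rw [place]
    split_ifs with hfit
    · exact List.pairwise_cons.2 ⟨fun C hC j hj hj' ↦ hB C hC j hj (hj'.of_cons hi), hbins⟩
    · refine List.pairwise_cons.2 ⟨fun C hC j hj ↦ ?_, ih hbins⟩
      have hmem := (flatten_place_perm i bins).subset (List.mem_flatten_of_mem hC hj)
      rcases List.mem_cons.1 hmem with rfl | hj'
      · exact hfit
      · obtain ⟨D, hD, hjD⟩ := List.mem_flatten.1 hj'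
        exact hB D hD j hjD

lemma pairwise_not_fits_packing (hsz : ∀ i, 0 ≤ sz i) (items : List ι) :
    (packing k sz items).Pairwise fun A B ↦ ∀ j ∈ B, ¬ Fits k sz A j := by
  induction items using List.reverseRecOn with
  | nil => exact .nil
  | append_singleton items i ih =>
    rw [packing_append_singleton]
    exact pairwise_not_fits_place (hsz i) ih

end LabelledItems

/-! ### The weight argument -/

section ItemWeight

variable {ι : Type*} {k : ℕ} {sz : ι → ℝ} {δ : ℝ}

/-- The weight of an item, where `F` is the set of items in full First Fit bins: with weight `1 / k`
for these items, every full bin weighs `1`. -/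
def itemWeight (k : ℕ) (sz : ι → ℝ) (δ : ℝ) (F : Set ι) (i : ι) : ℝ :=
  if i ∈ F then 1 / k else weight δ (sz i)

lemma length_le_card_flatten_mul (hk : 0 < k) {bins : List (List ι)}
    (hfull : ∀ B ∈ bins, k ≤ B.length) :
    (bins.length : ℝ) ≤ bins.flatten.length * (1 / k) := by
  have h := List.card_nsmul_le_sum (bins.map List.length) k
    (by simpa using hfull)
  rw [List.length_map, smul_eq_mul, ← List.length_flatten] at h
  rw [mul_one_div, le_div_iff₀ (by exact_mod_cast hk)]
  exact_mod_cast h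

lemma length_le_sum_itemWeight (hk : 0 < k) (hδ : δ ≤ 1 / 20) (hsz : ∀ i, 0 ≤ sz i)
    {bins : List (List ι)} (hnodup : bins.flatten.Nodup) (hne : [] ∉ bins)
    (hfit : bins.Pairwise fun A B ↦ ∀ i ∈ B, ¬ Fits k sz A i) :
    ∃ F : Set ι, (bins.length : ℝ) ≤ (bins.flatten.map (itemWeight k sz δ F)).sum + 12 / 5 := by
  set full := bins.filter fun B ↦ k ≤ B.length
  set rest := bins.filter fun B ↦ !decide (k ≤ B.length)
  have hperm : (full ++ rest).Perm bins := List.filter_append_perm ..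
  have hfull := length_le_card_flatten_mul (bins := full) hk fun B hB ↦ by
    simpa using List.of_mem_filter hB
  have hrest := length_le_sum_weight_add_potential hδ hsz rest (-1)
    (fun h ↦ hne (List.mem_of_mem_filter h))
    (fun i _ ↦ neg_one_lt_zero.trans_le (hsz i))
    ((hfit.filter _).imp_of_mem fun {A B} hA _ hAB i hi ↦ by
      have hlen : A.length < k := by simpa using List.of_mem_filter hA
      exact lt_of_not_ge fun h ↦ hAB i hi ⟨hlen, h⟩)
  have hdisj : full.flatten.Disjoint rest.flatten := by
    refine List.disjoint_of_nodup_append ?_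
    rwa [← List.flatten_append, hperm.flatten.nodup_iff]
  refine ⟨{i | i ∈ full.flatten}, ?_⟩
  have hwfull : full.flatten.map (itemWeight k sz δ {i | i ∈ full.flatten}) =
      full.flatten.map fun _ ↦ 1 / (k : ℝ) :=
    List.map_congr_left fun i hi ↦ if_pos hi
  have hwrest : rest.flatten.map (itemWeight k sz δ {i | i ∈ full.flatten}) =
      rest.flatten.map fun i ↦ weight δ (sz i) :=
    List.map_congr_left fun i hi ↦ if_neg fun hi' ↦ hdisj hi' hi
  rw [← hperm.length_eq, ← (hperm.flatten.map _).sum_eq, List.length_append, List.flatten_append,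
    List.map_append, List.sum_append, hwfull, hwrest, List.map_const', List.sum_replicate,
    nsmul_eq_mul]
  push_cast
  linarith only [hfull, hrest, potential_nonneg (-1)]

lemma sum_itemWeight_le (hk : 0 < k) (hδ : δ ≤ 1 / 20) (hδk : δ ≤ 1 / k)
    (hkδ : 1 / k ≤ 1 / 20 + δ) (hsz : ∀ i, 0 ≤ sz i) (F : Set ι) {T : Finset ι}
    (hcard : T.card ≤ k) (hsum : ∑ i ∈ T, sz i ≤ 1) :
    ∑ i ∈ T, itemWeight k sz δ F i ≤ 2.7 - 3 / k := by
  have hk₀ : (0 : ℝ) < k := by exact_mod_cast hk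
  set N := T.filter (· ∉ F)
  have hN : ∑ i ∈ N, sz i ≤ 1 :=
    (Finset.sum_le_sum_of_subset_of_nonneg (Finset.filter_subset _ _)
      fun i _ _ ↦ hsz i).trans hsum
  have hw := sum_weight_le_of_sum_le_one (N := N.val.map sz) (by positivity) hδ hδk hkδ
    (by simpa using fun i _ ↦ hsz i) hN
  rw [Multiset.map_map, Multiset.card_map] at hw
  change ∑ i ∈ N, weight δ (sz i) ≤ 17 / 10 + (N.card - 3) * (1 / (k : ℝ)) at hw
  have hplaces : ((T.filter (· ∈ F)).card + N.card) * (1 / (k : ℝ)) ≤ 1 := by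
    rw [mul_one_div, div_le_one hk₀]
    exact_mod_cast (Finset.card_filter_add_card_filter_not (· ∈ F)).le.trans hcard
  calc ∑ i ∈ T, itemWeight k sz δ F i
      = (T.filter (· ∈ F)).card * (1 / (k : ℝ)) + ∑ i ∈ N, weight δ (sz i) := by
        simp only [itemWeight, Finset.sum_ite, Finset.sum_const, nsmul_eq_mul, N]
    _ ≤ 27 / 10 - 3 * (1 / k) := by linarith only [hw, hplaces]
    _ = 2.7 - 3 / k := by ring

end ItemWeight

section Packings

variable {k : ℕ} {L : List ℝ}

lemma sum_le_binsUsed_mul {f : Fin L.length → ℕ} {w : Fin L.length → ℝ} {c : ℝ}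
    (hw : ∀ b, ∑ i with f i = b, w i ≤ c) : ∑ i, w i ≤ binsUsed L f * c := by
  rw [← Finset.sum_fiberwise_of_maps_to fun i _ ↦ Finset.mem_image_of_mem f (Finset.mem_univ i),
    ← nsmul_eq_mul]
  exact Finset.sum_le_card_nsmul _ _ _ fun b _ ↦ hw b

lemma isFeasible_val (hk : 1 ≤ k) (hL : ∀ x ∈ L, x ≤ 1) :
    IsFeasible k L Fin.val := by
  intro b
  have hcard : (Finset.univ.filter fun i : Fin L.length ↦ i.val = b).card ≤ 1 :=
    Finset.card_le_one.2 fun i hi j hj ↦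
      Fin.ext ((Finset.mem_filter.1 hi).2.trans (Finset.mem_filter.1 hj).2.symm)
  refine ⟨hcard.trans hk, ?_⟩
  calc _ ≤ (Finset.univ.filter fun i : Fin L.length ↦ i.val = b).card • (1 : ℝ) :=
        Finset.sum_le_card_nsmul _ _ _ fun i _ ↦ hL _ (L.get_mem i)
    _ ≤ 1 := by
        rw [nsmul_one]
        exact_mod_cast hcard

lemma exists_isFeasible_binsUsed_eq_OPT (hk : 1 ≤ k) (hL : ∀ x ∈ L, x ≤ 1) :
    ∃ f, IsFeasible k L f ∧ binsUsed L f = OPT k L :=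
  Nat.sInf_mem (s := {n | ∃ f, IsFeasible k L f ∧ binsUsed L f = n})
    ⟨_, Fin.val, isFeasible_val hk hL, rfl⟩

lemma exists_FF_le_sum_itemWeight {δ : ℝ} (hk : 0 < k) (hδ : δ ≤ 1 / 20) (hL : ∀ x ∈ L, 0 ≤ x) :
    ∃ F, (FF k L : ℝ) ≤ ∑ i, itemWeight k L.get δ F i + 12 / 5 := by
  have hsz : ∀ i, 0 ≤ L.get i := fun i ↦ hL _ (L.get_mem i)
  have hperm := flatten_packing_perm (k := k) (sz := L.get) (List.finRange L.length)
  obtain ⟨F, hF⟩ := length_le_sum_itemWeight hk hδ hsz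
    (hperm.nodup_iff.2 (List.nodup_finRange _)) (nil_notMem_packing _)
    (pairwise_not_fits_packing hsz _)
  refine ⟨F, ?_⟩
  have hFF : FF k L = (packing k L.get (List.finRange L.length)).length := by
    rw [FF, ← List.length_map (summary L.get), map_summary_packing, List.map_get_finRange]
  rwa [hFF, ← List.sum_ofFn, List.ofFn_eq_map, ← (hperm.map _).sum_eq]

end Packings

end FirstFit

theorem ff_k10_ub_general (k : ℕ) (hk : 10 ≤ k) (L : List ℝ) (hL : ∀ x ∈ L, 0 ≤ x)
    (f : Fin L.length → ℕ) (hf : IsFeasible k L f) :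
    (FF k L : ℝ) ≤ (2.7 - 3 / k) * binsUsed L f + 12 / 5 := by
  have hk₀ : 0 < k := by omega
  have hk_inv : 1 / (k : ℝ) ≤ 1 / 10 :=
    one_div_le_one_div_of_le (by norm_num) (by exact_mod_cast hk)
  set δ : ℝ := max 0 (1 / k - 1 / 20)
  have hδ : δ ≤ 1 / 20 := max_le (by norm_num) (by linarith only [hk_inv])
  have hδk : δ ≤ 1 / k := max_le (by positivity) (sub_le_self _ (by norm_num))
  have hkδ : 1 / k ≤ 1 / 20 + δ := sub_le_iff_le_add'.1 (le_max_right _ _)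
  obtain ⟨F, hFF⟩ := FirstFit.exists_FF_le_sum_itemWeight hk₀ hδ hL
  have hweight := FirstFit.sum_le_binsUsed_mul fun b ↦
    FirstFit.sum_itemWeight_le hk₀ hδ hδk hkδ (fun i ↦ hL _ (L.get_mem i)) F (hf b).1 (hf b).2
  linarith only [hFF, hweight]

/-- For every k ≥ 10 and every input `L`,
FF(L) ≤ (2.7 − 3/k)·OPT(L) + 5: the asymptotic competitive ratio of First Fit for
k ≥ 10 is at most 2.7 − 3/k. -/
theorem ff_k10_ub (k : ℕ) (hk : 10 ≤ k) (L : List ℝ) (hL : ValidInput L) :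
    (FF k L : ℝ) ≤ ((2.7 : ℝ) - 3 / k) * (OPT k L : ℝ) + 5 := by
  obtain ⟨f, hf, hf_opt⟩ :=
    FirstFit.exists_isFeasible_binsUsed_eq_OPT (k := k) (by omega) fun x hx ↦ (hL x hx).2
  rw [← hf_opt]
  linarith only [ff_k10_ub_general k hk L (fun x hx ↦ (hL x hx).1.le) f hf]
end
end

section
/- For every k ∈ {2, 3, 4} and every N, there exists an input list L such that OPT(L) ≥ N and FF(L) ≥ (2.5 − 2/k)·OPT(L), where FF is First Fit with cardinality constraint k. Consequently, the asymptotic competitive ratio of First Fit for k ∈ {2,3,4} is at least 2.5 − 2/k. -/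
/-!
Write `k = c + 2`. A bin of the packing to be hidden from First Fit holds `c` tiny items, one item
of size `2/5` and one item slightly larger than `1/2`. Each item of that bin is repeated `M` times,
so `M` bins suffice; since the `M` large items are pairwise incompatible, `M` bins are also
necessary. First Fit sees the items sorted by increasing size: it packs the tiny items `k` to a bin,
the middle ones two to a bin and the large ones one to a bin, and the bins of each phase are closed
for the items of all later phases. For `M` divisible by `2 * k` this makes
`c * M / k + M / 2 + M = (5/2 - 2/k) * M` bins.
-/

open scoped Classical
noncomputable section

lemma card_filter_get_eq_countP {α : Type*} (l : List α) (p : α → Prop) [DecidablePred p] :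
    (Finset.univ.filter fun i => p (l.get i)).card = l.countP p := by
  conv_rhs => rw [← l.ofFn_get, ← Multiset.coe_countP, ← Fin.univ_val_map, Multiset.countP_map]
  rfl

lemma getElem?_flatMap_replicate {α : Type*} (T : List α) {M j : ℕ} (hj : j < M) (t : ℕ) :
    (T.flatMap (List.replicate M))[j + M * t]? = T[t]? := by
  induction T generalizing t with
  | nil => simp
  | cons a T ih =>
    cases t with
    | zero => simp [List.getElem?_append, hj]
    | succ t =>
      rw [List.flatMap_cons, List.getElem?_append_right (by simp; lia), List.length_replicate,
        Nat.mul_succ, ← add_assoc, Nat.add_sub_cancel, ih, List.getElem?_cons_succ]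

/-- The negation of the First Fit test: the open bin `b` (item count, total size) cannot receive an
item of size `x`. Bins rejecting every item of a phase are never touched during that phase. -/
def Rejects (k : ℕ) (x : ℝ) (b : ℕ × ℝ) : Prop := ¬ (b.1 < k ∧ b.2 + x ≤ 1)

section FirstFit

variable {k n : ℕ} {x : ℝ} {L : List ℝ}

lemma rejects_of_le_card {b : ℕ × ℝ} (h : k ≤ b.1) : Rejects k x b :=
  fun hb => hb.1.not_ge h

lemma rejects_of_one_lt_add {b : ℕ × ℝ} (h : 1 < b.2 + x) : Rejects k x b :=
  fun hb => hb.2.not_gt h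

lemma ffUpdate_append_of_rejects {bs : List (ℕ × ℝ)} (h : ∀ b ∈ bs, Rejects k x b)
    (cs : List (ℕ × ℝ)) : ffUpdate k x (bs ++ cs) = bs ++ ffUpdate k x cs := by
  induction bs with
  | nil => rfl
  | cons b bs ih =>
    obtain ⟨hb, hbs⟩ := List.forall_mem_cons.1 h
    rw [List.cons_append, ffUpdate, if_neg hb, ih hbs, List.cons_append]

lemma ffState_append_singleton : ffState k (L ++ [x]) = ffUpdate k x (ffState k L) := by
  simp [ffState]

lemma ffState_append_replicate (hL : ∀ b ∈ ffState k L, Rejects k x b) (hn : 0 < n) (hnk : n ≤ k)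
    (hnx : n * x ≤ 1) :
    ffState k (L ++ List.replicate n x) = ffState k L ++ [(n, n * x)] := by
  induction n, hn using Nat.le_induction with
  | base =>
    simpa [ffUpdate, ffState_append_singleton] using ffUpdate_append_of_rejects hL []
  | succ n _ ih =>
    push_cast [add_one_mul] at hnx ⊢
    have fits_before : n * x ≤ 1 := by
      rcases le_total 0 x with hx | hx
      · linarith
      · exact (mul_nonpos_of_nonneg_of_nonpos n.cast_nonneg hx).trans zero_le_one
    have accepts : n < k ∧ n * x + x ≤ 1 := ⟨hnk, hnx⟩
    rw [List.replicate_succ', ← List.append_assoc, ffState_append_singleton,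
      ih (by lia) fits_before, ffUpdate_append_of_rejects hL, ffUpdate, if_pos accepts]

lemma ffState_append_replicate_mul (hL : ∀ b ∈ ffState k L, Rejects k x b) (hn : 0 < n)
    (hnk : n ≤ k) (hnx : n * x ≤ 1) (hfull : Rejects k x (n, n * x)) (j : ℕ) :
    ffState k (L ++ List.replicate (n * j) x) = ffState k L ++ List.replicate j (n, n * x) := by
  induction j with
  | zero => simp
  | succ j ih =>
    have rejects_all : ∀ b ∈ ffState k (L ++ List.replicate (n * j) x), Rejects k x b := by
      rw [ih]
      exact List.forall_mem_append.2 ⟨hL, fun b hb => List.eq_of_mem_replicate hb ▸ hfull⟩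
    rw [Nat.mul_succ, List.replicate_add, ← List.append_assoc,
      ffState_append_replicate rejects_all hn hnk hnx, ih, List.append_assoc,
      ← List.replicate_succ']

end FirstFit

section Optimum

variable {k : ℕ} {L : List ℝ}

lemma isFeasible_val (hk : 0 < k) (hL : ∀ x ∈ L, x ≤ 1) : IsFeasible k L Fin.val := by
  intro b
  by_cases hb : b < L.length
  · have singleton : Finset.univ.filter (fun i : Fin L.length => i.val = b) = {⟨b, hb⟩} := by
      ext i
      simp [Fin.ext_iff]
    rw [singleton, Finset.card_singleton, Finset.sum_singleton]
    exact ⟨hk, hL _ (L.get_mem _)⟩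
  · have empty : Finset.univ.filter (fun i : Fin L.length => i.val = b) = ∅ :=
      Finset.filter_false_of_mem fun i _ => by lia
    simp [empty]

lemma countP_half_lt_le_binsUsed (hL : ∀ x ∈ L, 0 ≤ x) {f : Fin L.length → ℕ}
    (hf : IsFeasible k L f) : L.countP (1 / 2 < ·) ≤ binsUsed L f := by
  rw [← card_filter_get_eq_countP]
  have separated : Set.InjOn f (Finset.univ.filter fun i => 1 / 2 < L.get i) := by
    intro i hi j hj hij
    simp only [Finset.coe_filter, Finset.mem_univ, true_and, Set.mem_ofPred_eq] at hi hj
    by_contra hne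
    have together : {i, j} ⊆ Finset.univ.filter fun t => f t = f j := by
      simp [Finset.insert_subset_iff, hij]
    have pair_le := Finset.sum_le_sum_of_subset_of_nonneg (f := L.get) together
      fun t _ _ => hL _ (L.get_mem t)
    rw [Finset.sum_pair hne] at pair_le
    linarith [(hf (f j)).2]
  rw [← Finset.card_image_of_injOn separated]
  exact Finset.card_le_card (Finset.image_subset_image (Finset.filter_subset _ _))

lemma countP_half_lt_le_OPT (hk : 0 < k) (hL : ValidInput L) :
    L.countP (1 / 2 < ·) ≤ OPT k L := by
  refine le_csInf ⟨_, _, isFeasible_val hk fun x hx => (hL x hx).2, rfl⟩ ?_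
  rintro _ ⟨f, hf, rfl⟩
  exact countP_half_lt_le_binsUsed (fun x hx => (hL x hx).1.le) hf

lemma isFeasible_of_equiv {ι : Type*} [Fintype ι] {M : ℕ} (e : Fin L.length ≃ ι × Fin M)
    (hcard : Fintype.card ι ≤ k) (hsum : ∀ j, ∑ t, L.get (e.symm (t, j)) ≤ 1) :
    IsFeasible k L fun i => (e i).2 := by
  intro b
  by_cases hb : b < M
  · let slot : ι ↪ Fin L.length :=
      (Function.Embedding.sectL ι (⟨b, hb⟩ : Fin M)).trans e.symm.toEmbedding
    have bin_eq_map :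
        Finset.univ.filter (fun i => ((e i).2 : ℕ) = b) = Finset.univ.map slot := by
      ext i
      simp [slot, Equiv.symm_apply_eq, Prod.ext_iff, Fin.ext_iff (n := M), eq_comm (a := b)]
    rw [bin_eq_map, Finset.card_map, Finset.sum_map]
    exact ⟨hcard, hsum ⟨b, hb⟩⟩
  · have empty : Finset.univ.filter (fun i => ((e i).2 : ℕ) = b) = ∅ :=
      Finset.filter_false_of_mem fun i _ => by lia
    simp [empty]

lemma OPT_le_of_equiv {ι : Type*} [Fintype ι] {M : ℕ} (e : Fin L.length ≃ ι × Fin M)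
    (hcard : Fintype.card ι ≤ k) (hsum : ∀ j, ∑ t, L.get (e.symm (t, j)) ≤ 1) :
    OPT k L ≤ M := by
  have image_subset : Finset.univ.image (fun i => ((e i).2 : ℕ)) ⊆ Finset.range M :=
    Finset.image_subset_iff.2 fun i _ => Finset.mem_range.2 (e i).2.is_lt
  calc OPT k L ≤ binsUsed L fun i => (e i).2 :=
        Nat.sInf_le ⟨_, isFeasible_of_equiv e hcard hsum, rfl⟩
    _ ≤ (Finset.range M).card := Finset.card_le_card image_subset
    _ = M := Finset.card_range M

lemma OPT_flatMap_replicate_le {T : List ℝ} (hcard : T.length ≤ k) (hsum : T.sum ≤ 1) (M : ℕ) :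
    OPT k (T.flatMap (List.replicate M)) ≤ M := by
  have length_eq : (T.flatMap (List.replicate M)).length = T.length * M := by
    simp [List.length_flatMap]
  let e := (finCongr length_eq).trans finProdFinEquiv.symm
  have get_eq (t : Fin T.length) (j : Fin M) :
      (T.flatMap (List.replicate M)).get (e.symm (t, j)) = T.get t := by
    apply Option.some_injective
    rw [List.get_eq_getElem, List.get_eq_getElem, ← List.getElem?_eq_getElem,
      ← List.getElem?_eq_getElem]
    exact getElem?_flatMap_replicate T j.is_lt t
  refine OPT_le_of_equiv e (by simpa using hcard) fun j => ?_
  simp only [get_eq]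
  simpa using hsum

end Optimum

/-- The size of the smallest items of the hard input for `k = c + 2`; `k` of them fill only a tenth
of a bin. -/
def tinySize (c : ℕ) : ℝ := 1 / (10 * (c + 2))

/-- The contents of each bin of the optimal packing of the hard input for `k = c + 2`: `c` tiny
items, one middle and one large item. -/
def hardBin (c : ℕ) : List ℝ := List.replicate c (tinySize c) ++ [2 / 5, 1 / 2 + tinySize c]

/-- The hard input for `k = c + 2`: each item of `hardBin c` is repeated `M` times, and equal items
arrive consecutively, in increasing order of size. -/
def hardInput (c M : ℕ) : List ℝ := (hardBin c).flatMap (List.replicate M)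

section HardInput

variable (c M : ℕ)

lemma tinySize_pos : 0 < tinySize c := by
  unfold tinySize
  positivity

lemma add_two_mul_tinySize : (c + 2) * tinySize c = 1 / 10 := by
  unfold tinySize
  field_simp

lemma tinySize_le : tinySize c ≤ 1 / 20 := by
  nlinarith [add_two_mul_tinySize c, mul_nonneg c.cast_nonneg (tinySize_pos c).le]

lemma length_hardBin : (hardBin c).length = c + 2 := by
  simp [hardBin]

lemma sum_hardBin_le_one : (hardBin c).sum ≤ 1 := by
  have sum_eq : (hardBin c).sum = (c + 2) * tinySize c - tinySize c + 9 / 10 := by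
    simp only [hardBin, List.sum_append, List.sum_replicate, nsmul_eq_mul, List.sum_cons,
      List.sum_nil]
    ring
  rw [sum_eq, add_two_mul_tinySize]
  linarith [tinySize_pos c]

lemma hardInput_eq_append :
    hardInput c M = List.replicate (c * M) (tinySize c) ++ List.replicate M (2 / 5) ++
      List.replicate M (1 / 2 + tinySize c) := by
  simp [hardInput, hardBin, List.flatMap_replicate]

lemma validInput_hardInput : ValidInput (hardInput c M) := by
  intro x hx
  simp only [hardInput_eq_append, List.mem_append, List.mem_replicate] at hx
  obtain (⟨-, rfl⟩ | ⟨-, rfl⟩) | ⟨-, rfl⟩ := hx <;>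
    constructor <;> linarith [tinySize_pos c, tinySize_le c]

lemma OPT_hardInput : OPT (c + 2) (hardInput c M) = M := by
  apply le_antisymm
  · exact OPT_flatMap_replicate_le (length_hardBin c).le (sum_hardBin_le_one c) M
  · calc M = (List.replicate M (1 / 2 + tinySize c)).countP (1 / 2 < ·) := by
          simp [List.countP_replicate, tinySize_pos]
      _ ≤ (hardInput c M).countP (1 / 2 < ·) := by
          rw [hardInput_eq_append]
          exact (List.sublist_append_right _ _).countP_le
      _ ≤ OPT (c + 2) (hardInput c M) :=
          countP_half_lt_le_OPT (Nat.succ_pos _) (validInput_hardInput c M)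

lemma ffState_tiny (j : ℕ) :
    ffState (c + 2) (List.replicate ((c + 2) * j) (tinySize c)) =
      List.replicate j (c + 2, 1 / 10) := by
  have tiny_phase := ffState_append_replicate_mul (k := c + 2) (n := c + 2)
    (x := tinySize c) (L := []) (by simp [ffState]) (by lia) le_rfl
    (by push_cast; linarith [add_two_mul_tinySize c])
    (rejects_of_le_card le_rfl) j
  push_cast [add_two_mul_tinySize] at tiny_phase
  simpa [ffState] using tiny_phase

lemma ffState_tiny_middle (i j : ℕ) :
    ffState (c + 2) (List.replicate ((c + 2) * i) (tinySize c) ++ List.replicate (2 * j) (2 / 5)) =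
      List.replicate i (c + 2, 1 / 10) ++ List.replicate j (2, 4 / 5) := by
  have tiny_bins_reject : ∀ b ∈ ffState (c + 2) (List.replicate ((c + 2) * i) (tinySize c)),
      Rejects (c + 2) (2 / 5) b := by
    rw [ffState_tiny]
    exact fun b hb => List.eq_of_mem_replicate hb ▸ rejects_of_le_card le_rfl
  rw [ffState_append_replicate_mul tiny_bins_reject two_pos (by lia) (by norm_num)
    (rejects_of_one_lt_add (by norm_num)), ffState_tiny]
  norm_num

lemma ffState_tiny_middle_large (i j l : ℕ) :
    ffState (c + 2) (List.replicate ((c + 2) * i) (tinySize c) ++ List.replicate (2 * j) (2 / 5) ++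
        List.replicate l (1 / 2 + tinySize c)) =
      List.replicate i (c + 2, 1 / 10) ++ List.replicate j (2, 4 / 5) ++
        List.replicate l (1, 1 / 2 + tinySize c) := by
  have earlier_bins_reject : ∀ b ∈ ffState (c + 2)
      (List.replicate ((c + 2) * i) (tinySize c) ++ List.replicate (2 * j) (2 / 5)),
      Rejects (c + 2) (1 / 2 + tinySize c) b := by
    rw [ffState_tiny_middle, List.forall_mem_append]
    constructor <;> intro b hb <;> rw [List.eq_of_mem_replicate hb]
    · exact rejects_of_le_card le_rfl
    · exact rejects_of_one_lt_add (by linarith [tinySize_pos c])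
  have large_phase := ffState_append_replicate_mul earlier_bins_reject one_pos (by lia)
    (by linarith [tinySize_le c]) (rejects_of_one_lt_add (by linarith [tinySize_pos c])) l
  simpa only [one_mul, Nat.cast_one, ffState_tiny_middle] using large_phase

lemma FF_hardInput (m : ℕ) : FF (c + 2) (hardInput c (2 * (c + 2) * m)) = (5 * c + 6) * m := by
  have input_eq : hardInput c (2 * (c + 2) * m) =
      List.replicate ((c + 2) * (2 * c * m)) (tinySize c) ++
        List.replicate (2 * ((c + 2) * m)) (2 / 5) ++
        List.replicate (2 * (c + 2) * m) (1 / 2 + tinySize c) := by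
    rw [hardInput_eq_append]
    congr 3 <;> ring
  rw [FF, input_eq, ffState_tiny_middle_large]
  simp only [List.length_append, List.length_replicate]
  ring

end HardInput

theorem ff_lb_small_k_general (k : ℕ) (hk : 2 ≤ k) (N : ℕ) :
    ∃ L : List ℝ, ValidInput L ∧ N ≤ OPT k L ∧
      ((2.5 : ℝ) - 2 / k) * (OPT k L : ℝ) ≤ (FF k L : ℝ) := by
  obtain ⟨c, rfl⟩ := Nat.exists_eq_add_of_le' hk
  refine ⟨hardInput c (2 * (c + 2) * N), validInput_hardInput _ _, ?_, le_of_eq ?_⟩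
  · rw [OPT_hardInput]
    exact Nat.le_mul_of_pos_left N (by positivity)
  · rw [OPT_hardInput, FF_hardInput]
    push_cast
    field_simp
    ring

/-- For k ∈ {2,3,4} and every N there is an input `L` with OPT(L) ≥ N
and FF(L) ≥ (2.5 − 2/k)·OPT(L): the asymptotic competitive ratio of First Fit for
k ∈ {2,3,4} is at least 2.5 − 2/k. -/
theorem ff_lb_small_k (k : ℕ) (hk : k = 2 ∨ k = 3 ∨ k = 4) (N : ℕ) :
    ∃ L : List ℝ, ValidInput L ∧ N ≤ OPT k L ∧
      ((2.5 : ℝ) - 2 / k) * (OPT k L : ℝ) ≤ (FF k L : ℝ) :=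
  ff_lb_small_k_general k (by lia) N
end
end
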